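/- Let Σ be a simplicial complex on [m] (containing ∅, ghost vertices allowed). With basepoint * = 1 ∈ S⁰ = {−1,1}, the subspace Z_Σ(D¹,S⁰) ∖ S_Σ(D¹,S⁰) of [−1,1]^m, equipped with the subspace topology, is homeomorphic to the unbounded cone CΣ = Z_Σ([0,∞),{0}) ⊆ [0,∞)^m. -/

import Mathlib

open CategoryTheory

/-- A simplicial complex on a finite index set: a collection of finite subsets
containing the empty set and closed under passing to subsets
(ghost vertices are allowed). -/
def IsSimplicialComplex {I : Type} (S : Set (Finset I)) : Prop :=
  ∅ ∈ S ∧ ∀ σ ∈ S, ∀ τ : Finset I, τ ⊆ σ → τ ∈ S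

/-- The polyhedral product `Z_Σ(X, A) = ⋃_{σ∈Σ} {x ∈ X^m : xᵢ ∈ A for all i ∉ σ}`
determined by a collection `Σ` of subsets of `[m]` and a pair of sets `A ⊆ X`. -/
def polyhedralProduct {m : ℕ} (S : Set (Finset (Fin m))) {Y : Type*}
    (X A : Set Y) : Set (Fin m → Y) :=
  ⋃ σ ∈ S, {x | (∀ i, x i ∈ X) ∧ ∀ i, i ∉ σ → x i ∈ A}

/-- The subspace `S_Σ(X, A)` of the polyhedral product `Z_Σ(X, A)` consisting
of the points having at least one coordinate equal to the basepoint. -/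
def polyhedralProductBase {m : ℕ} (S : Set (Finset (Fin m))) {Y : Type*}
    (X A : Set Y) (pt : Y) : Set (Fin m → Y) :=
  {x ∈ polyhedralProduct S X A | ∃ i, x i = pt}

/-! Removing the basepoint from `Z_Σ(X, A)` gives `Z_Σ(X ∖ {*}, A ∖ {*})`, so the space in question
is `Z_Σ([−1, 1), {−1})`. The Möbius transformation `x ↦ (1 + x) / (1 - x)` is a homeomorphism of
pairs `([−1, 1), {−1}) ≅ ([0, ∞), {0})`, and `Z_Σ` is functorial in the pair. -/

section PolyhedralProduct

variable {m : ℕ} {S : Set (Finset (Fin m))} {Y Z : Type*} {X A : Set Y} {x : Fin m → Y}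

theorem mem_polyhedralProduct :
    x ∈ polyhedralProduct S X A ↔ ∃ σ ∈ S, (∀ i, x i ∈ X) ∧ ∀ i, i ∉ σ → x i ∈ A := by
  simp only [polyhedralProduct, Set.mem_iUnion, Set.mem_ofPred_eq, exists_prop]

theorem apply_mem_of_mem_polyhedralProduct (hx : x ∈ polyhedralProduct S X A) (i : Fin m) :
    x i ∈ X := by
  obtain ⟨_, _, hX, _⟩ := mem_polyhedralProduct.1 hx
  exact hX i

theorem polyhedralProduct_sdiff_singleton (S : Set (Finset (Fin m))) (X A : Set Y) (pt : Y) :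
    polyhedralProduct S (X \ {pt}) (A \ {pt}) =
      {x ∈ polyhedralProduct S X A | ∀ i, x i ≠ pt} := by
  ext x
  simp only [mem_polyhedralProduct, Set.mem_ofPred_eq, Set.mem_sdiff_singleton]
  constructor
  · rintro ⟨σ, hσ, hX, hA⟩
    exact ⟨⟨σ, hσ, fun i => (hX i).1, fun i hi => (hA i hi).1⟩, fun i => (hX i).2⟩
  · rintro ⟨⟨σ, hσ, hX, hA⟩, hne⟩
    exact ⟨σ, hσ, fun i => ⟨hX i, hne i⟩, fun i hi => ⟨hA i hi, hne i⟩⟩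

theorem polyhedralProduct_sdiff_polyhedralProductBase (S : Set (Finset (Fin m))) (X A : Set Y)
    (pt : Y) :
    polyhedralProduct S X A \ polyhedralProductBase S X A pt =
      polyhedralProduct S (X \ {pt}) (A \ {pt}) := by
  rw [polyhedralProduct_sdiff_singleton]
  ext x
  simp only [polyhedralProductBase, Set.mem_sdiff, Set.mem_ofPred_eq, not_and, not_exists, ne_eq]
  exact and_congr_right fun hx => forall_prop_of_true hx

theorem mapsTo_comp_polyhedralProduct {X' A' : Set Z} {f : Y → Z}
    (hX : Set.MapsTo f X X') (hA : Set.MapsTo f (X ∩ A) A') :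
    Set.MapsTo (f ∘ ·) (polyhedralProduct S X A) (polyhedralProduct S X' A') := by
  intro x hx
  obtain ⟨σ, hσ, hxX, hxA⟩ := mem_polyhedralProduct.1 hx
  exact mem_polyhedralProduct.2
    ⟨σ, hσ, fun i => hX (hxX i), fun i hi => hA ⟨hxX i, hxA i hi⟩⟩

variable [TopologicalSpace Y] [TopologicalSpace Z]

theorem continuousOn_comp_polyhedralProduct {f : Y → Z} (hf : ContinuousOn f X) :
    ContinuousOn (f ∘ ·) (polyhedralProduct S X A) :=
  continuousOn_pi.2 fun i => hf.comp (continuous_apply i).continuousOn fun _ hx =>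
    apply_mem_of_mem_polyhedralProduct hx i

/-- Functoriality of `Z_Σ`: a homeomorphism of pairs `(X, A) ≅ (X', A')`, encoded as a partial
homeomorphism `e` with source `X` and target `X'` that matches `A` with `A'`, acts coordinatewise
as a homeomorphism `Z_Σ(X, A) ≅ Z_Σ(X', A')`. -/
def polyhedralProductCongr (S : Set (Finset (Fin m))) (e : PartialHomeomorph Y Z) {A' : Set Z}
    (h : e.IsImage A A') : PartialHomeomorph (Fin m → Y) (Fin m → Z) where
  toFun := (e ∘ ·)
  invFun := (e.symm ∘ ·)
  source := polyhedralProduct S e.source A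
  target := polyhedralProduct S e.target A'
  map_source' := mapsTo_comp_polyhedralProduct e.mapsTo fun _ hx => (h.mapsTo hx).2
  map_target' := mapsTo_comp_polyhedralProduct e.mapsTo_symm fun _ hy => (h.symm_mapsTo hy).2
  left_inv' _ hx := funext fun i => e.left_inv (apply_mem_of_mem_polyhedralProduct hx i)
  right_inv' _ hy := funext fun i => e.right_inv (apply_mem_of_mem_polyhedralProduct hy i)
  continuousOn_toFun := continuousOn_comp_polyhedralProduct e.continuousOn
  continuousOn_invFun := continuousOn_comp_polyhedralProduct e.continuousOn_symm

end PolyhedralProduct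

section CayleyInverse

variable {𝕜 : Type*} [Field 𝕜] [NeZero (2 : 𝕜)] {x y : 𝕜}

theorem sub_one_div_add_one_one_add_div_one_sub (hx : x ≠ 1) :
    ((1 + x) / (1 - x) - 1) / ((1 + x) / (1 - x) + 1) = x := by
  have hne : 1 - x ≠ 0 := sub_ne_zero.2 hx.symm
  calc
    ((1 + x) / (1 - x) - 1) / ((1 + x) / (1 - x) + 1)
      = (1 + x - (1 - x)) / (1 + x + (1 - x)) := by
        rw [div_sub_one hne, div_add_one hne, div_div_div_cancel_right₀ hne]
    _ = 2 * x / 2 := by ring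
    _ = x := mul_div_cancel_left₀ x two_ne_zero

theorem one_add_div_one_sub_sub_one_div_add_one (hy : y ≠ -1) :
    (1 + (y - 1) / (y + 1)) / (1 - (y - 1) / (y + 1)) = y := by
  have hne : y + 1 ≠ 0 := mt eq_neg_of_add_eq_zero_left hy
  calc
    (1 + (y - 1) / (y + 1)) / (1 - (y - 1) / (y + 1))
      = (y + 1 + (y - 1)) / (y + 1 - (y - 1)) := by
        rw [one_add_div hne, one_sub_div hne, div_div_div_cancel_right₀ hne]
    _ = 2 * y / 2 := by ring
    _ = y := mul_div_cancel_left₀ y two_ne_zero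

end CayleyInverse

section Cayley

variable {𝕜 : Type*} [Field 𝕜] [LinearOrder 𝕜] [IsStrictOrderedRing 𝕜] {x y : 𝕜}

theorem one_add_div_one_sub_nonneg (hx : x ∈ Set.Ico (-1) 1) : 0 ≤ (1 + x) / (1 - x) :=
  div_nonneg (neg_le_iff_add_nonneg'.1 hx.1) (sub_nonneg.2 hx.2.le)

theorem sub_one_div_add_one_mem_Ico (hy : 0 ≤ y) : (y - 1) / (y + 1) ∈ Set.Ico (-1) 1 := by
  have hpos : 0 < y + 1 := by positivity
  constructor
  · rw [le_div_iff₀ hpos]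
    linarith
  · rw [div_lt_one hpos]
    linarith

variable [TopologicalSpace 𝕜] [IsTopologicalDivisionRing 𝕜]

variable (𝕜) in
/-- The Cayley transform `x ↦ (1 + x) / (1 - x)` as a homeomorphism from `[-1, 1)` onto `[0, ∞)`.
It sends `-1` to `0`, and the missing endpoint `1` to infinity. -/
def cayleyTransform : PartialHomeomorph 𝕜 𝕜 where
  toFun x := (1 + x) / (1 - x)
  invFun y := (y - 1) / (y + 1)
  source := Set.Ico (-1) 1
  target := Set.Ici 0
  map_source' _ hx := one_add_div_one_sub_nonneg hx
  map_target' _ hy := sub_one_div_add_one_mem_Ico hy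
  left_inv' _ hx := sub_one_div_add_one_one_add_div_one_sub hx.2.ne
  right_inv' _ hy := one_add_div_one_sub_sub_one_div_add_one (neg_one_lt_zero.trans_le hy).ne'
  continuousOn_toFun := ContinuousOn.div (by fun_prop) (by fun_prop) fun _ hx =>
    (sub_pos.2 hx.2).ne'
  continuousOn_invFun := ContinuousOn.div (by fun_prop) (by fun_prop) fun _ hy =>
    (add_pos_of_nonneg_of_pos hy one_pos).ne'

theorem isImage_cayleyTransform : (cayleyTransform 𝕜).IsImage {-1} {0} := by
  intro x hx
  change (1 + x) / (1 - x) = 0 ↔ x = -1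
  rw [div_eq_zero_iff, or_iff_left (sub_pos.2 hx.2).ne', add_comm, add_eq_zero_iff_eq_neg]

end Cayley

theorem realMomentAngle_diff_base_homeomorph_cone_general {𝕜 : Type*} [Field 𝕜] [LinearOrder 𝕜]
    [IsStrictOrderedRing 𝕜] [TopologicalSpace 𝕜] [IsTopologicalDivisionRing 𝕜] {m : ℕ}
    (S : Set (Finset (Fin m))) :
    Nonempty
      (↥(polyhedralProduct S (Set.Icc (-1 : 𝕜) 1) {-1, 1} \
          polyhedralProductBase S (Set.Icc (-1 : 𝕜) 1) {-1, 1} 1) ≃ₜ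
        ↥(polyhedralProduct S (Set.Ici (0 : 𝕜)) {0})) := by
  have hne : (-1 : 𝕜) ≠ 1 := (neg_lt_self one_pos).ne
  rw [polyhedralProduct_sdiff_polyhedralProductBase, Set.Icc_sdiff_right, Set.pair_sdiff_right hne]
  exact ⟨(polyhedralProductCongr S (cayleyTransform 𝕜)
    isImage_cayleyTransform).toHomeomorphSourceTarget⟩

/-- With basepoint `* = 1 ∈ S⁰`, the complement of `S_Σ(D¹,S⁰)` in the real
moment-angle complex `Z_Σ(D¹,S⁰) ⊆ [−1,1]^m` (with the subspace topology) is
homeomorphic to the unbounded cone `𝒞Σ = Z_Σ([0,∞), {0}) ⊆ [0,∞)^m`. -/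
theorem realMomentAngle_diff_base_homeomorph_cone {m : ℕ}
    (S : Set (Finset (Fin m))) (hS : IsSimplicialComplex S) :
    Nonempty
      ((↥(polyhedralProduct S (Set.Icc (-1 : ℝ) 1) {-1, 1} \
          polyhedralProductBase S (Set.Icc (-1 : ℝ) 1) {-1, 1} 1)) ≃ₜ
        ↥(polyhedralProduct S (Set.Ici (0 : ℝ)) {0})) :=
  realMomentAngle_diff_base_homeomorph_cone_general S
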